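/- arXiv:2603.13535 — 2 statements merged into one kernel-verified Lean document; each statement's English description precedes it below -/
import Mathlib

section
/- Let (i,j) ∈ E be an edge of a finite connected simple graph G, with lazy parameters α_u = 1/(ρ_u+1) and lazy measures m_i, m_j. Then there exists an optimal coupling π⋆ of m_i and m_j (i.e., one achieving W₁(m_i,m_j)) such that π⋆(k,k) = min{m_i(k), m_j(k)} for every k ∈ {i,j} ∪ (N(i) ∩ N(j)). In particular π⋆(i,i) = min{α_i, (1−α_j)/ρ_j}, π⋆(j,j) = min{α_j, (1−α_i)/ρ_i}, and π⋆(k,k) = min{(1−α_i)/ρ_i, (1−α_j)/ρ_j} for every common neighbor k ∈ N(i) ∩ N(j). -/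
namespace Curv

open Finset

noncomputable section

variable {V : Type*} [Fintype V] [DecidableEq V] (G : SimpleGraph V) [DecidableRel G.Adj]

/-- `μ` is a probability distribution on the (finite) vertex set. -/
def IsProb (μ : V → ℝ) : Prop := (∀ x, 0 ≤ μ x) ∧ ∑ x, μ x = 1

/-- `π` is a coupling of `μ` and `ν`. -/
def IsCoupling (μ ν : V → ℝ) (π : V → V → ℝ) : Prop :=
  (∀ x y, 0 ≤ π x y) ∧ (∀ x, ∑ y, π x y = μ x) ∧ (∀ y, ∑ x, π x y = ν y)

/-- Transport cost of a plan `π` with respect to the shortest-path graph distance. -/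
def cost (π : V → V → ℝ) : ℝ := ∑ x, ∑ y, (G.dist x y : ℝ) * π x y

/-- Wasserstein-1 distance between two distributions on the vertex set. -/
def W1 (μ ν : V → ℝ) : ℝ := sInf {c : ℝ | ∃ π, IsCoupling μ ν π ∧ cost G π = c}

/-- Dirac mass at `u`. -/
def dirac (u : V) : V → ℝ := fun x => if x = u then 1 else 0

/-- Uniform distribution on the neighbours of `u`. -/
def unif (u : V) : V → ℝ := fun x => if G.Adj u x then ((G.degree u : ℝ))⁻¹ else 0

/-- Lazy random-walk measure with laziness parameter `α`. -/
def mGen (α : ℝ) (u : V) : V → ℝ := fun x => α * dirac u x + (1 - α) * unif G u x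

/-- Canonical laziness `1/(deg u + 1)`. -/
def alphaL (u : V) : ℝ := ((G.degree u : ℝ) + 1)⁻¹

/-- The lazy random-walk measure `m_u`. -/
def mLazy (u : V) : V → ℝ := mGen G (alphaL G u) u

/-- Ollivier–Ricci curvature (lazy). -/
def cOR (i j : V) : ℝ := 1 - W1 G (mLazy G i) (mLazy G j)

/-- Non-lazy Ollivier–Ricci curvature. -/
def cOR0 (i j : V) : ℝ := 1 - W1 G (unif G i) (unif G j)

/-- Positive part `[x]₊`. -/
def pos (x : ℝ) : ℝ := max x 0

/-- Triangle count `△(u,v)`. -/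
def tri (u v : V) : ℕ := (G.neighborFinset u ∩ G.neighborFinset v).card

/-- Unique neighbours `N(u) \ (N(v) ∪ {v})`. -/
def uniq (u v : V) : Finset V := G.neighborFinset u \ insert v (G.neighborFinset v)

/-- `ξ_u(u,v)`: unique neighbours of `u` having a neighbour among unique neighbours of `v`. -/
def xiSet (u v : V) : Finset V := (uniq G u v).filter fun k => ∃ w ∈ uniq G v u, G.Adj k w

/-- `Ξ_uv`. -/
def Xi (u v : V) : ℕ := (xiSet G u v).card + (xiSet G v u).card

/-- `□̃(k,u,v) = |N(k) ∩ (N(v)\(N(u)∪{u}))|`. -/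
def boxT (k u v : V) : ℕ := (G.neighborFinset k ∩ uniq G v u).card

/-- `ϖ_max(u,v)`. -/
def varpi (u v : V) : ℕ :=
  max (((G.neighborFinset u).erase v).sup fun k => boxT G k u v)
      (((G.neighborFinset v).erase u).sup fun w => boxT G w v u)

/-- `þ_max(u,v) = ϖ_max(u,v)·max{ρ_u,ρ_v}`. -/
def thMax (u v : V) : ℕ := varpi G u v * max (G.degree u) (G.degree v)

/-- Edgewise 4-cycle coefficient `C₄(u,v)`. -/
def C4 (u v : V) : ℝ := if 0 < Xi G u v then (Xi G u v : ℝ) / (thMax G u v : ℝ) else 0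

/-- Graph-wide 4-cycle constant `C₄(G)`. -/
def C4Graph : ℝ := sSup {x : ℝ | ∃ u v, G.Adj u v ∧ x = C4 G u v}

def rhoMin (i j : V) : ℕ := min (G.degree i) (G.degree j)

def rhoMax (i j : V) : ℕ := max (G.degree i) (G.degree j)

/-- `𝔖(i,j)`. -/
def frakS (i j : V) : ℝ := 2 / (G.degree i : ℝ) + 2 / (G.degree j : ℝ) - 2

/-- `𝔗(i,j)`. -/
def frakT (i j : V) : ℝ := 2 / (rhoMax G i j : ℝ) + 1 / (rhoMin G i j : ℝ)

/-- `𝔎(i,j)`. -/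
def frakK (i j : V) : ℝ := 1 - 1 / (rhoMin G i j : ℝ) - 1 / (rhoMax G i j : ℝ)

/-- `Z_min(i,j)`. -/
def Zmin (i j : V) : ℝ := (tri G i j : ℝ) / (rhoMin G i j : ℝ)

/-- `Z_max(i,j)`. -/
def Zmax (i j : V) : ℝ := (tri G i j : ℝ) / (rhoMax G i j : ℝ)

/-- Balanced Forman curvature. -/
def cBF (i j : V) : ℝ :=
  if rhoMin G i j = 1 then 0
  else frakS G i j + frakT G i j * (tri G i j : ℝ) + C4 G i j

/-- `M` is a matching in the cross-edge bipartite graph `B_ij`. -/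
def IsCrossMatching (i j : V) (M : Finset (V × V)) : Prop :=
  (∀ p ∈ M, p.1 ∈ uniq G i j ∧ p.2 ∈ uniq G j i ∧ G.Adj p.1 p.2) ∧
  (∀ p ∈ M, ∀ q ∈ M, p ≠ q → p.1 ≠ q.1 ∧ p.2 ≠ q.2)

/-- Maximum matching size `𝔪(i,j)` in the cross-edge bipartite graph. -/
def matchNum (i j : V) : ℕ :=
  sSup {n : ℕ | ∃ M : Finset (V × V), IsCrossMatching G i j M ∧ M.card = n}

/-- `𝒮(i,j) = 𝔪(i,j)/ρ_max`. -/
def SS (i j : V) : ℝ := (matchNum G i j : ℝ) / (rhoMax G i j : ℝ)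

/-- Lazy per-neighbour weight `w_u = (1-α)/ρ_u`. -/
def wA (α : ℝ) (u : V) : ℝ := (1 - α) / (G.degree u : ℝ)

/-- Lazy conductance sum `Σ`. -/
def SigmaA (αi αj : ℝ) (i j : V) : ℝ :=
  (G.degree i : ℝ) / (1 - αi) + (G.degree j : ℝ) / (1 - αj)

/-- `Const_α`. -/
def ConstA (αi αj : ℝ) (i j : V) : ℝ :=
  -1 + 2 * (min αi ((1 - αj) / (G.degree j : ℝ)) + min αj ((1 - αi) / (G.degree i : ℝ)))
    + (pos (αi - (1 - αj) / (G.degree j : ℝ)) + pos ((1 - αj) / (G.degree j : ℝ) - αi)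
      + pos (αj - (1 - αi) / (G.degree i : ℝ)) + pos ((1 - αi) / (G.degree i : ℝ) - αj))
    + ((G.degree i : ℝ) + (G.degree j : ℝ) - 2) / SigmaA G αi αj i j

/-- `Slope_α`. -/
def SlopeA (αi αj : ℝ) (i j : V) : ℝ := wA G αi i + wA G αj j - 2 / SigmaA G αi αj i j

/-- `α_⋆`: `α_min` when the non-lazy curvature is nonnegative, `α_max` otherwise. -/
def alphaStar (i j : V) : ℝ :=
  if 0 ≤ cOR0 G i j then min (alphaL G i) (alphaL G j) else max (alphaL G i) (alphaL G j)

/-- `Δ_ij(α) = α_max − α_min` for the canonical laziness. -/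
def DeltaL (i j : V) : ℝ := max (alphaL G i) (alphaL G j) - min (alphaL G i) (alphaL G j)

/-!
Among the couplings of minimal cost, take one with the largest total diagonal mass. If it carried
less than `min (μ k) (ν k)` at some `(k, k)`, then it would send mass from `k` to some `a ≠ k` and
from some `b ≠ k` to `k`. Sending a little of that mass from `b` straight to `a`, and keeping as
much at `k`, preserves the marginals, does not increase the cost by the triangle inequality, and
increases the diagonal mass, a contradiction. Both measures live in one connected component, so no
coupling charges a pair in different components, where `SimpleGraph.dist` is the junk value `0` and
the triangle inequality can fail.
-/

section Transport

variable {X : Type*} [Fintype X] {μ ν : X → ℝ} {π : X → X → ℝ}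

namespace IsCoupling

theorem swap (hπ : IsCoupling μ ν π) : IsCoupling ν μ fun y x => π x y :=
  ⟨fun y x => hπ.1 x y, hπ.2.2, hπ.2.1⟩

theorem apply_le_left (hπ : IsCoupling μ ν π) (x y : X) : π x y ≤ μ x := by
  rw [← hπ.2.1 x]
  exact single_le_sum (f := π x) (fun z _ => hπ.1 x z) (mem_univ y)

theorem apply_le_right (hπ : IsCoupling μ ν π) (x y : X) : π x y ≤ ν y :=
  hπ.swap.apply_le_left y x

theorem exists_ne_pos_of_diag_lt_left (hπ : IsCoupling μ ν π) {k : X} (hk : π k k < μ k) :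
    ∃ a ≠ k, 0 < π k a := by
  by_contra! hoff
  have hrow : ∑ y, π k y = π k k :=
    Fintype.sum_eq_single k fun y hy => (hoff y hy).antisymm (hπ.1 k y)
  exact hk.ne (hrow.symm.trans (hπ.2.1 k))

theorem exists_ne_pos_of_diag_lt_right (hπ : IsCoupling μ ν π) {k : X} (hk : π k k < ν k) :
    ∃ b ≠ k, 0 < π b k :=
  hπ.swap.exists_ne_pos_of_diag_lt_left hk

end IsCoupling

theorem IsProb.isCoupling_mul (hμ : IsProb μ) (hν : IsProb ν) :
    IsCoupling μ ν fun x y => μ x * ν y := by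
  refine ⟨fun x y => mul_nonneg (hμ.1 x) (hν.1 y), fun x => ?_, fun y => ?_⟩
  · rw [← mul_sum, hν.2, mul_one]
  · rw [← sum_mul, hμ.2, one_mul]

theorem isCompact_setOf_isCoupling (μ ν : X → ℝ) : IsCompact {π | IsCoupling μ ν π} := by
  have hbox : IsCompact (Set.univ.pi fun x : X => Set.univ.pi fun _ : X => Set.Icc 0 (μ x)) :=
    isCompact_univ_pi fun _ => isCompact_univ_pi fun _ => isCompact_Icc
  refine hbox.of_isClosed_subset ?_ fun π hπ x _ y _ => ⟨hπ.1 x y, hπ.apply_le_left x y⟩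
  simp only [IsCoupling, Set.ofPred_and, Set.ofPred_forall]
  refine .inter ?_ (.inter ?_ ?_)
  · exact isClosed_iInter fun x => isClosed_iInter fun y =>
      isClosed_le continuous_const (by fun_prop)
  · exact isClosed_iInter fun x => isClosed_eq (by fun_prop) continuous_const
  · exact isClosed_iInter fun y => isClosed_eq (by fun_prop) continuous_const

variable (H : SimpleGraph X)

theorem continuous_cost : Continuous (cost H) := by
  unfold cost
  fun_prop

theorem IsCoupling.isLeast_W1 (hπ : IsCoupling μ ν π) :
    IsLeast (cost H '' {π | IsCoupling μ ν π}) (W1 H μ ν) :=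
  ((isCompact_setOf_isCoupling μ ν).image (continuous_cost H)).isLeast_sInf ⟨_, π, hπ, rfl⟩

theorem IsCoupling.exists_optimal_forall_sum_diag_le (hπ : IsCoupling μ ν π) :
    ∃ π₀, IsCoupling μ ν π₀ ∧ cost H π₀ = W1 H μ ν ∧
      ∀ π', IsCoupling μ ν π' → cost H π' = W1 H μ ν → ∑ x, π' x x ≤ ∑ x, π₀ x x := by
  have hcompact : IsCompact ({π | IsCoupling μ ν π} ∩ {π | cost H π = W1 H μ ν}) :=
    (isCompact_setOf_isCoupling μ ν).inter_right
      (isClosed_eq (continuous_cost H) continuous_const)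
  have hdiag : Continuous fun π : X → X → ℝ => ∑ x, π x x := by fun_prop
  obtain ⟨π₀, ⟨hcoupling, hcost⟩, hmax⟩ :=
    hcompact.exists_isMaxOn (hπ.isLeast_W1 H).1 hdiag.continuousOn
  exact ⟨π₀, hcoupling, hcost, fun π' hπ' hcost' => hmax ⟨hπ', hcost'⟩⟩

end Transport

section Exchange

variable {X : Type*} [DecidableEq X]

/-- The elementary exchange of transport theory: mass `ε` travelling `x → y` and mass `ε`
travelling `x' → y'` are sent `x → y'` and `x' → y` instead. The product form makes the marginals
visibly unchanged and needs no distinctness of the four points. -/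
def exchange (π : X → X → ℝ) (x y x' y' : X) (ε : ℝ) : X → X → ℝ := fun u v =>
  π u v + ε * ((dirac x u - dirac x' u) * (dirac y' v - dirac y v))

theorem dirac_nonneg (u x : X) : 0 ≤ dirac u x := by
  unfold dirac
  split_ifs <;> norm_num

theorem exchange_nonneg {π : X → X → ℝ} (hπ : ∀ u v, 0 ≤ π u v) {x y x' y' : X} {ε : ℝ}
    (hε : 0 ≤ ε) (hxy : ε ≤ π x y) (hxy' : ε ≤ π x' y') (u v : X) :
    0 ≤ exchange π x y x' y' ε u v := by
  have huv := hπ u v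
  unfold exchange dirac
  split_ifs <;> subst_vars <;> linarith

variable [Fintype X]

theorem sum_mul_dirac (f : X → ℝ) (u : X) : ∑ x, f x * dirac u x = f u := by
  simp [dirac]

theorem isProb_dirac (u : X) : IsProb (dirac u) :=
  ⟨dirac_nonneg u, by simp [dirac]⟩

theorem IsCoupling.exchange {μ ν : X → ℝ} {π : X → X → ℝ} (hπ : IsCoupling μ ν π)
    {x y x' y' : X} {ε : ℝ} (hε : 0 ≤ ε) (hxy : ε ≤ π x y) (hxy' : ε ≤ π x' y') :
    IsCoupling μ ν (exchange π x y x' y' ε) := by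
  refine ⟨exchange_nonneg hπ.1 hε hxy hxy', fun u => ?_, fun v => ?_⟩
  · simp only [Curv.exchange, sum_add_distrib, ← mul_sum, sum_sub_distrib, (isProb_dirac _).2,
      hπ.2.1, sub_self, mul_zero, add_zero]
  · simp only [Curv.exchange, sum_add_distrib, ← mul_sum, ← sum_mul, sum_sub_distrib,
      (isProb_dirac _).2, hπ.2.2, sub_self, zero_mul, mul_zero, add_zero]

theorem sum_mul_exchange (c π : X → X → ℝ) (x y x' y' : X) (ε : ℝ) :
    ∑ u, ∑ v, c u v * exchange π x y x' y' ε u v =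
      ∑ u, ∑ v, c u v * π u v + ε * (c x y' + c x' y - c x y - c x' y') := by
  have hterm (u v : X) : c u v * exchange π x y x' y' ε u v = c u v * π u v +
      ε * ((c u v * dirac y' v - c u v * dirac y v) * dirac x u -
        (c u v * dirac y' v - c u v * dirac y v) * dirac x' u) := by
    unfold exchange
    ring
  simp only [hterm, sum_add_distrib, ← mul_sum, ← sum_mul, sum_sub_distrib, sum_mul_dirac]
  ring

theorem cost_exchange (H : SimpleGraph X) (π : X → X → ℝ) (x y x' y' : X) (ε : ℝ) :
    cost H (exchange π x y x' y' ε) = cost H π +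
      ε * (H.dist x y' + H.dist x' y - H.dist x y - H.dist x' y') :=
  sum_mul_exchange (fun u v => (H.dist u v : ℝ)) π x y x' y' ε

-- The diagonal mass is the cost of `π` for the cost function `1_{u = v}`.
theorem sum_diag_exchange (π : X → X → ℝ) (x y x' y' : X) (ε : ℝ) :
    ∑ u, exchange π x y x' y' ε u u = ∑ u, π u u +
      ε * (dirac x y' + dirac x' y - dirac x y - dirac x' y') := by
  have hdiag (ρ : X → X → ℝ) : ∑ u, ρ u u = ∑ u, ∑ v, dirac u v * ρ u v := by simp [dirac]
  rw [hdiag, hdiag, sum_mul_exchange]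

end Exchange

section Saturation

variable {X : Type*} [Fintype X] {μ ν : X → ℝ} {π : X → X → ℝ} {H : SimpleGraph X}

theorem IsCoupling.exists_sum_diag_lt (hπ : IsCoupling μ ν π)
    (hreach : ∀ x y, 0 < μ x → 0 < ν y → H.Reachable x y)
    {k : X} (hkμ : π k k < μ k) (hkν : π k k < ν k) :
    ∃ π', IsCoupling μ ν π' ∧ cost H π' ≤ cost H π ∧ ∑ x, π x x < ∑ x, π' x x := by
  classical
  obtain ⟨a, hak, ha⟩ := hπ.exists_ne_pos_of_diag_lt_left hkμ
  obtain ⟨b, hbk, hb⟩ := hπ.exists_ne_pos_of_diag_lt_right hkν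
  have hε : 0 < min (π k a) (π b k) := lt_min ha hb
  refine ⟨Curv.exchange π k a b k (min (π k a) (π b k)),
    hπ.exchange hε.le (min_le_left _ _) (min_le_right _ _), ?_, ?_⟩
  · have hreach_bk : H.Reachable b k :=
      hreach b k (hb.trans_le (hπ.apply_le_left b k)) (hb.trans_le (hπ.apply_le_right b k))
    have htriangle : (H.dist b a : ℝ) ≤ H.dist b k + H.dist k a :=
      mod_cast hreach_bk.dist_triangle_left a
    rw [cost_exchange, SimpleGraph.dist_self, Nat.cast_zero, add_le_iff_nonpos_right]
    exact mul_nonpos_of_nonneg_of_nonpos hε.le (by linarith)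
  · have hgain : 0 < dirac k k + dirac b a - dirac k a - dirac b k := by
      have hba := dirac_nonneg b a
      simp only [dirac, if_true, if_neg hak, if_neg hbk.symm] at hba ⊢
      linarith
    rw [sum_diag_exchange]
    exact lt_add_of_pos_right _ (mul_pos hε hgain)

theorem IsCoupling.exists_optimal_forall_diag_eq_min (hπ : IsCoupling μ ν π)
    (hreach : ∀ x y, 0 < μ x → 0 < ν y → H.Reachable x y) :
    ∃ π₀, IsCoupling μ ν π₀ ∧ cost H π₀ = W1 H μ ν ∧ ∀ k, π₀ k k = min (μ k) (ν k) := by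
  obtain ⟨π₀, hcoupling, hcost, hmax⟩ := hπ.exists_optimal_forall_sum_diag_le H
  refine ⟨π₀, hcoupling, hcost, fun k => ?_⟩
  by_contra hne
  have hlt : π₀ k k < min (μ k) (ν k) :=
    (le_min (hcoupling.apply_le_left k k) (hcoupling.apply_le_right k k)).lt_of_ne hne
  obtain ⟨hkμ, hkν⟩ := lt_min_iff.1 hlt
  obtain ⟨π', hπ', hcost_le, hdiag_lt⟩ := hcoupling.exists_sum_diag_lt hreach hkμ hkν
  have hcost' : cost H π' = W1 H μ ν :=
    (hcost_le.trans_eq hcost).antisymm ((hπ.isLeast_W1 H).2 ⟨π', hπ', rfl⟩)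
  exact hdiag_lt.not_ge (hmax π' hπ' hcost')

end Saturation

section LazyWalk

variable {X : Type*} [Fintype X]

theorem IsProb.convexCombination {μ ν : X → ℝ} (hμ : IsProb μ) (hν : IsProb ν) {α : ℝ}
    (hα₀ : 0 ≤ α) (hα₁ : α ≤ 1) : IsProb fun x => α * μ x + (1 - α) * ν x := by
  refine ⟨fun x => add_nonneg (mul_nonneg hα₀ (hμ.1 x))
    (mul_nonneg (sub_nonneg.2 hα₁) (hν.1 x)), ?_⟩
  rw [sum_add_distrib, ← mul_sum, ← mul_sum, hμ.2, hν.2]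
  ring

variable (H : SimpleGraph X) [DecidableRel H.Adj]

theorem alphaL_nonneg (u : X) : 0 ≤ alphaL H u := by
  unfold alphaL
  positivity

theorem alphaL_le_one (u : X) : alphaL H u ≤ 1 :=
  inv_le_one_of_one_le₀ (le_add_of_nonneg_left (Nat.cast_nonneg _))

theorem isProb_unif {u : X} (hu : 0 < H.degree u) : IsProb (unif H u) := by
  refine ⟨fun x => ?_, ?_⟩
  · unfold unif
    split_ifs <;> positivity
  · simp only [unif]
    rw [← sum_filter, sum_const, ← SimpleGraph.neighborFinset_eq_filter,
      SimpleGraph.card_neighborFinset_eq_degree, nsmul_eq_mul,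
      mul_inv_cancel₀ (Nat.cast_ne_zero.2 hu.ne')]

end LazyWalk

theorem isProb_mGen {α : ℝ} (hα₀ : 0 ≤ α) (hα₁ : α ≤ 1) {u : V} (hu : 0 < G.degree u) :
    IsProb (mGen G α u) :=
  (isProb_dirac u).convexCombination (isProb_unif G hu) hα₀ hα₁

theorem mGen_self (α : ℝ) (u : V) : mGen G α u u = α := by
  simp [mGen, dirac, unif]

theorem mGen_of_adj (α : ℝ) {u v : V} (huv : G.Adj u v) :
    mGen G α u v = (1 - α) / G.degree u := by
  simp [mGen, dirac, unif, huv, huv.ne', div_eq_mul_inv]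

theorem reachable_of_mGen_ne_zero {α : ℝ} {u x : V} (hx : mGen G α u x ≠ 0) :
    G.Reachable u x := by
  by_contra hux
  have hne : x ≠ u := fun h => hux (h ▸ .refl _)
  have hadj : ¬ G.Adj u x := fun h => hux h.reachable
  simp [mGen, dirac, unif, hne, hadj] at hx

theorem stmt17_general {i j : V} (hij : G.Adj i j) {α β : ℝ} (hα₀ : 0 ≤ α) (hα₁ : α ≤ 1)
    (hβ₀ : 0 ≤ β) (hβ₁ : β ≤ 1) :
    ∃ π : V → V → ℝ, IsCoupling (mGen G α i) (mGen G β j) π ∧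
      cost G π = W1 G (mGen G α i) (mGen G β j) ∧
      (∀ k, π k k = min (mGen G α i k) (mGen G β j k)) ∧
      π i i = min α ((1 - β) / (G.degree j : ℝ)) ∧
      π j j = min β ((1 - α) / (G.degree i : ℝ)) ∧
      (∀ k, G.Adj i k → G.Adj j k →
        π k k = min ((1 - α) / (G.degree i : ℝ)) ((1 - β) / (G.degree j : ℝ))) := by
  have hμ : IsProb (mGen G α i) := isProb_mGen G hα₀ hα₁ hij.degree_pos_left
  have hν : IsProb (mGen G β j) := isProb_mGen G hβ₀ hβ₁ hij.degree_pos_right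
  have hreach : ∀ x y, 0 < mGen G α i x → 0 < mGen G β j y → G.Reachable x y := fun x y hx hy =>
    (reachable_of_mGen_ne_zero G hx.ne').symm.trans
      (hij.reachable.trans (reachable_of_mGen_ne_zero G hy.ne'))
  obtain ⟨π, hπ, hcost, hdiag⟩ := (hμ.isCoupling_mul hν).exists_optimal_forall_diag_eq_min hreach
  refine ⟨π, hπ, hcost, hdiag, ?_, ?_, fun k hik hjk => ?_⟩
  · rw [hdiag, mGen_self, mGen_of_adj G β hij.symm]
  · rw [hdiag, mGen_self, mGen_of_adj G α hij, min_comm]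
  · rw [hdiag, mGen_of_adj G α hik, mGen_of_adj G β hjk]

/-- existence of a diagonal-saturating optimal coupling for the lazy measures. -/
theorem stmt17 (hG : G.Connected) (i j : V) (hij : G.Adj i j) :
    ∃ π : V → V → ℝ, IsCoupling (mLazy G i) (mLazy G j) π ∧
      cost G π = W1 G (mLazy G i) (mLazy G j) ∧
      (∀ k, (k = i ∨ k = j ∨ (G.Adj i k ∧ G.Adj j k)) →
        π k k = min (mLazy G i k) (mLazy G j k)) ∧
      π i i = min (alphaL G i) ((1 - alphaL G j) / (G.degree j : ℝ)) ∧
      π j j = min (alphaL G j) ((1 - alphaL G i) / (G.degree i : ℝ)) ∧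
      (∀ k, G.Adj i k → G.Adj j k →
        π k k = min ((1 - alphaL G i) / (G.degree i : ℝ))
                    ((1 - alphaL G j) / (G.degree j : ℝ))) := by
  obtain ⟨π, hπ, hcost, hdiag, hvalues⟩ := stmt17_general G hij (alphaL_nonneg G i)
    (alphaL_le_one G i) (alphaL_nonneg G j) (alphaL_le_one G j)
  exact ⟨π, hπ, hcost, fun k _ => hdiag k, hvalues⟩

end

end Curv
end

section
/- Let (i,j) ∈ E be an edge of a finite connected simple graph G with ρ_min ≥ 2, and suppose c_BF(i,j) ≥ ζ for some ζ ∈ ℝ. Then 𝔗(i,j)·△(i,j) + C₄(i,j) ≥ ζ − 𝔖(i,j); moreover C₄(i,j) ≥ [ζ − 𝔖(i,j) − 𝔗(i,j)·(ρ_min − 1)]₊ and 𝒮(i,j) ≥ (1/2)·[ζ − 𝔖(i,j) − 𝔗(i,j)·(ρ_min − 1)]₊, where [x]₊ = max{0,x}. -/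
namespace Curv

open Finset

noncomputable section

variable {V : Type*} [Fintype V] [DecidableEq V] (G : SimpleGraph V) [DecidableRel G.Adj]

/-!
Only the bound on `𝒮` is not immediate from the definitions. A maximum matching in the cross-edge
bipartite graph cannot be enlarged, so its `2𝔪` endpoints meet every cross edge. Hence every vertex
of `ξ_i` is adjacent to one of the `𝔪` matched vertices on the side of `j`: either its own partner
or a matched endpoint of one of its cross edges. Each of these has at most `ϖ_max` neighbours in
`U_i`, so `|ξ_i| ≤ 𝔪 ϖ_max`. By symmetry `Ξ ≤ 2 𝔪 ϖ_max`, that is, `C₄ ≤ 2𝒮`.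
-/

theorem isCrossMatching_empty (i j : V) : IsCrossMatching G i j ∅ := by
  simp [IsCrossMatching]

theorem bddAbove_card_isCrossMatching (i j : V) :
    BddAbove {n : ℕ | ∃ M : Finset (V × V), IsCrossMatching G i j M ∧ M.card = n} :=
  ⟨Fintype.card (V × V), by rintro _ ⟨M, -, rfl⟩; exact card_le_univ M⟩

theorem exists_isCrossMatching_card_eq_matchNum (i j : V) :
    ∃ M : Finset (V × V), IsCrossMatching G i j M ∧ M.card = matchNum G i j := by
  refine Nat.sSup_mem ?_ (bddAbove_card_isCrossMatching G i j)
  exact ⟨0, ∅, isCrossMatching_empty G i j, card_empty⟩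

section Matching

variable {G} {i j k w : V} {M : Finset (V × V)}

theorem IsCrossMatching.swap (hM : IsCrossMatching G i j M) :
    IsCrossMatching G j i (M.map (Equiv.prodComm V V).toEmbedding) := by
  simp only [IsCrossMatching, mem_map_equiv]
  constructor
  · intro p hp
    obtain ⟨hi, hj, hadj⟩ := hM.1 _ hp
    exact ⟨hj, hi, hadj.symm⟩
  · intro p hp q hq hpq
    exact (hM.2 _ hp _ hq ((Equiv.prodComm V V).symm.injective.ne hpq)).symm

theorem IsCrossMatching.insert (hM : IsCrossMatching G i j M) (hk : k ∈ uniq G i j)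
    (hw : w ∈ uniq G j i) (hkw : G.Adj k w) (hfree : ∀ p ∈ M, p.1 ≠ k ∧ p.2 ≠ w) :
    IsCrossMatching G i j (insert (k, w) M) := by
  refine ⟨?_, fun p hp q hq hpq ↦ ?_⟩
  · rw [forall_mem_insert]
    exact ⟨⟨hk, hw, hkw⟩, hM.1⟩
  · rcases mem_insert.1 hp with rfl | hpM <;> rcases mem_insert.1 hq with rfl | hqM
    · exact absurd rfl hpq
    · exact ⟨(hfree q hqM).1.symm, (hfree q hqM).2.symm⟩
    · exact hfree p hpM
    · exact hM.2 p hpM q hqM hpq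

theorem IsCrossMatching.card_le_matchNum (hM : IsCrossMatching G i j M) :
    M.card ≤ matchNum G i j :=
  le_csSup (bddAbove_card_isCrossMatching G i j) ⟨M, hM, rfl⟩

theorem IsCrossMatching.exists_mem_of_adj_of_card_eq (hM : IsCrossMatching G i j M)
    (hcard : M.card = matchNum G i j) (hk : k ∈ uniq G i j) (hw : w ∈ uniq G j i)
    (hkw : G.Adj k w) : ∃ p ∈ M, p.1 = k ∨ p.2 = w := by
  by_contra! hfree
  have hnotMem : (k, w) ∉ M := fun h ↦ (hfree _ h).1 rfl
  have hle := (hM.insert hk hw hkw hfree).card_le_matchNum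
  rw [card_insert_of_notMem hnotMem, hcard] at hle
  exact Nat.not_succ_le_self _ hle

theorem IsCrossMatching.xiSet_subset_biUnion (hM : IsCrossMatching G i j M)
    (hcard : M.card = matchNum G i j) :
    xiSet G i j ⊆ M.biUnion fun p ↦ G.neighborFinset p.2 ∩ uniq G i j := by
  intro k hk
  obtain ⟨hk, w, hw, hkw⟩ := mem_filter.1 hk
  obtain ⟨p, hp, hend⟩ := hM.exists_mem_of_adj_of_card_eq hcard hk hw hkw
  have hadj : G.Adj p.2 k := by
    rcases hend with rfl | rfl
    · exact (hM.1 p hp).2.2.symm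
    · exact hkw.symm
  exact mem_biUnion.2 ⟨p, hp, mem_inter.2 ⟨(G.mem_neighborFinset _ _).2 hadj, hk⟩⟩

end Matching

theorem matchNum_le_matchNum_swap (i j : V) : matchNum G i j ≤ matchNum G j i := by
  obtain ⟨M, hM, hcard⟩ := exists_isCrossMatching_card_eq_matchNum G i j
  simpa only [card_map, hcard] using hM.swap.card_le_matchNum

theorem matchNum_comm (i j : V) : matchNum G i j = matchNum G j i :=
  (matchNum_le_matchNum_swap G i j).antisymm (matchNum_le_matchNum_swap G j i)

theorem varpi_comm (u v : V) : varpi G u v = varpi G v u :=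
  max_comm _ _

theorem uniq_subset_erase (u v : V) : uniq G u v ⊆ (G.neighborFinset u).erase v := by
  rw [uniq, sdiff_insert]
  exact erase_subset_erase v sdiff_subset

theorem boxT_le_varpi {u v k : V} (hk : k ∈ uniq G u v) : boxT G k u v ≤ varpi G u v :=
  (le_sup (f := fun k ↦ boxT G k u v) (uniq_subset_erase G u v hk)).trans (le_max_left _ _)

theorem card_xiSet_le (i j : V) : (xiSet G i j).card ≤ matchNum G i j * varpi G i j := by
  obtain ⟨M, hM, hcard⟩ := exists_isCrossMatching_card_eq_matchNum G i j
  calc (xiSet G i j).card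
      ≤ (M.biUnion fun p ↦ G.neighborFinset p.2 ∩ uniq G i j).card :=
        card_le_card (hM.xiSet_subset_biUnion hcard)
    _ ≤ M.card * varpi G j i :=
        card_biUnion_le_card_mul _ _ _ fun p hp ↦ boxT_le_varpi G (hM.1 p hp).2.1
    _ = matchNum G i j * varpi G i j := by rw [hcard, varpi_comm]

theorem Xi_le_two_mul (i j : V) : Xi G i j ≤ 2 * (matchNum G i j * varpi G i j) := by
  have hi := card_xiSet_le G i j
  have hj := card_xiSet_le G j i
  rw [matchNum_comm G j i, varpi_comm G j i] at hj
  rw [Xi, two_mul]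
  exact add_le_add hi hj

theorem C4_eq_div (i j : V) : C4 G i j = (Xi G i j : ℝ) / (thMax G i j : ℝ) := by
  rw [C4, ite_eq_left_iff, Nat.not_lt, Nat.le_zero]
  intro hXi
  rw [hXi, Nat.cast_zero, zero_div]

theorem C4_nonneg (i j : V) : 0 ≤ C4 G i j := by
  rw [C4_eq_div]
  positivity

theorem C4_le_two_mul_SS (i j : V) : C4 G i j ≤ 2 * SS G i j := by
  have hXi : (Xi G i j : ℝ) ≤ 2 * matchNum G i j * varpi G i j := by
    exact_mod_cast (Xi_le_two_mul G i j).trans_eq (mul_assoc _ _ _).symm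
  calc C4 G i j
      = (Xi G i j : ℝ) / varpi G i j / rhoMax G i j := by
        rw [C4_eq_div, thMax, Nat.cast_mul, div_div, rhoMax]
    _ ≤ 2 * matchNum G i j / rhoMax G i j := by
        gcongr
        exact div_le_of_le_mul₀ (by positivity) (by positivity) hXi
    _ = 2 * SS G i j := mul_div_assoc _ _ _

theorem tri_eq_card_commonNeighbors (u v : V) :
    tri G u v = Fintype.card (G.commonNeighbors u v) := by
  rw [tri, ← Set.toFinset_card]
  congr 1
  ext x
  simp [SimpleGraph.mem_commonNeighbors]

theorem tri_comm (u v : V) : tri G u v = tri G v u := by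
  rw [tri, tri, inter_comm]

variable {G} in
theorem tri_lt_degree {u v : V} (huv : G.Adj u v) : tri G u v < G.degree u := by
  rw [tri_eq_card_commonNeighbors]
  exact huv.card_commonNeighbors_lt_degree

variable {G} in
theorem tri_lt_rhoMin {i j : V} (hij : G.Adj i j) : tri G i j < rhoMin G i j :=
  lt_min (tri_lt_degree hij) (tri_comm G i j ▸ tri_lt_degree hij.symm)

variable {G} in
theorem frakT_mul_tri_le {i j : V} (hij : G.Adj i j) :
    frakT G i j * (tri G i j : ℝ) ≤ frakT G i j * ((rhoMin G i j : ℝ) - 1) := by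
  have hT : 0 ≤ frakT G i j := by
    unfold frakT
    positivity
  have htri : (tri G i j : ℝ) + 1 ≤ rhoMin G i j := by
    exact_mod_cast tri_lt_rhoMin hij
  exact mul_le_mul_of_nonneg_left (le_sub_iff_add_le.2 htri) hT

theorem stmt19_general (i j : V) (hij : G.Adj i j)
    (hmin : 2 ≤ rhoMin G i j) (z : ℝ) (hBF : cBF G i j ≥ z) :
    (frakT G i j * (tri G i j : ℝ) + C4 G i j ≥ z - frakS G i j) ∧
    (C4 G i j ≥ pos (z - frakS G i j - frakT G i j * ((rhoMin G i j : ℝ) - 1))) ∧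
    (SS G i j ≥ (1 / 2) * pos (z - frakS G i j - frakT G i j * ((rhoMin G i j : ℝ) - 1))) := by
  rw [cBF, if_neg (by omega)] at hBF
  have hbudget : frakT G i j * (tri G i j : ℝ) + C4 G i j ≥ z - frakS G i j := by linarith
  have hC4 : C4 G i j ≥ pos (z - frakS G i j - frakT G i j * ((rhoMin G i j : ℝ) - 1)) :=
    max_le (by linarith [frakT_mul_tri_le hij]) (C4_nonneg G i j)
  exact ⟨hbudget, hC4, by linarith [C4_le_two_mul_SS G i j]⟩

/-- budget inequalities forced by a BF lower level `ζ`. -/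
theorem stmt19 (hG : G.Connected) (i j : V) (hij : G.Adj i j)
    (hmin : 2 ≤ rhoMin G i j) (z : ℝ) (hBF : cBF G i j ≥ z) :
    (frakT G i j * (tri G i j : ℝ) + C4 G i j ≥ z - frakS G i j) ∧
    (C4 G i j ≥ pos (z - frakS G i j - frakT G i j * ((rhoMin G i j : ℝ) - 1))) ∧
    (SS G i j ≥ (1 / 2) * pos (z - frakS G i j - frakT G i j * ((rhoMin G i j : ℝ) - 1))) :=
  stmt19_general G i j hij hmin z hBF

end

end Curv
end
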